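/- Fix d ≥ 1, k ≥ 0 and ρ ∈ (0,1]. There exists a constant C = C(d,k,ρ) such that for every h > 0, every z ∈ ℝ^d, every convex set K with B(z,ρh) ⊆ K ⊆ B(z,h), every continuously differentiable function p : ℝ^d → ℝ, and every polynomial vector field u : ℝ^d → ℝ^d of degree ≤ k, one has h² ∫_K ‖∇p‖² dx ≤ C ( h² ∫_K ‖∇p − Δu‖² dx + ∫_K ‖Du‖² dx ). -/

import Mathlib

open MeasureTheory

/-- Partial derivative `∂f/∂x_j` of a scalar function on `ℝ^d`. -/
noncomputable def pderiv' {d : ℕ} (f : EuclideanSpace ℝ (Fin d) → ℝ) (j : Fin d)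
    (x : EuclideanSpace ℝ (Fin d)) : ℝ :=
  fderiv ℝ f x (EuclideanSpace.single j 1)

/-- Laplacian `Δf = ∑_j ∂²f/∂x_j²` of a scalar function on `ℝ^d`. -/
noncomputable def lap' {d : ℕ} (f : EuclideanSpace ℝ (Fin d) → ℝ)
    (x : EuclideanSpace ℝ (Fin d)) : ℝ :=
  ∑ j : Fin d, pderiv' (fun y => pderiv' f j y) j x

namespace PGC

/-- Evaluation of a polynomial on Euclidean space. -/
noncomputable def ev {d : ℕ} (P : MvPolynomial (Fin d) ℝ) (x : EuclideanSpace ℝ (Fin d)) : ℝ :=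
  MvPolynomial.eval (fun j => x j) P

lemma ev_cont {d : ℕ} (P : MvPolynomial (Fin d) ℝ) : Continuous (ev P) := by
  unfold ev
  exact (MvPolynomial.continuous_eval P).comp (by fun_prop)

lemma intOn {d : ℕ} {f : EuclideanSpace ℝ (Fin d) → ℝ} (hf : Continuous f)
    (z : EuclideanSpace ℝ (Fin d)) (r : ℝ) {s : Set (EuclideanSpace ℝ (Fin d))}
    (hs : s ⊆ Metric.ball z r) : IntegrableOn f s :=
  (hf.continuousOn.integrableOn_compact (isCompact_closedBall z r)).mono_set
    (hs.trans Metric.ball_subset_closedBall)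

lemma ev_memLp {d : ℕ} (P : MvPolynomial (Fin d) ℝ) (r : ℝ) :
    MemLp (ev P) 2 (volume.restrict (Metric.ball (0 : EuclideanSpace ℝ (Fin d)) r)) := by
  rw [memLp_two_iff_integrable_sq (ev_cont P).aestronglyMeasurable]
  exact intOn ((ev_cont P).pow 2) 0 r subset_rfl

/-- Polynomials as elements of `L²` of a ball. -/
noncomputable def toL {d : ℕ} (r : ℝ) : MvPolynomial (Fin d) ℝ →ₗ[ℝ]
    Lp ℝ 2 (volume.restrict (Metric.ball (0 : EuclideanSpace ℝ (Fin d)) r)) where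
  toFun P := (ev_memLp P r).toLp (ev P)
  map_add' P Q := by
    rw [← MemLp.toLp_add]
    congr 1
    ext x
    simp [ev]
  map_smul' c P := by
    rw [RingHom.id_apply, ← MemLp.toLp_const_smul]
    congr 1
    ext x
    simp [ev, MvPolynomial.smul_eval]

lemma norm_toL {d : ℕ} (r : ℝ) (P : MvPolynomial (Fin d) ℝ) :
    ‖toL r P‖ ^ 2 = ∫ x in Metric.ball (0 : EuclideanSpace ℝ (Fin d)) r, ev P x ^ 2 := by
  rw [← real_inner_self_eq_norm_sq, L2.inner_def]
  apply integral_congr_ae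
  filter_upwards [MemLp.coeFn_toLp (ev_memLp P r)] with x hx
  change inner ℝ (((ev_memLp P r).toLp (ev P)) x) (((ev_memLp P r).toLp (ev P)) x) = _
  rw [hx]
  simp [sq]

lemma toL_inj {d : ℕ} {r : ℝ} (hr : 0 < r) (P : MvPolynomial (Fin d) ℝ) (h : toL r P = 0) :
    P = 0 := by
  have h1 : ev P =ᵐ[volume.restrict (Metric.ball (0 : EuclideanSpace ℝ (Fin d)) r)]
      (fun _ => 0) := by
    have := MemLp.coeFn_toLp (ev_memLp P r)
    have h' : (ev_memLp P r).toLp (ev P) = 0 := h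
    rw [h'] at this
    exact this.symm.trans (Lp.coeFn_zero _ _ _)
  have h2 := Measure.eqOn_open_of_ae_eq h1 Metric.isOpen_ball (ev_cont P).continuousOn
    continuousOn_const
  have h3 : (fun y : Fin d → ℝ => WithLp.toLp 2 y) ⁻¹' (Metric.ball (0 : EuclideanSpace ℝ (Fin d)) r)
      ∈ nhds (0 : Fin d → ℝ) := by
    apply (PiLp.continuous_toLp 2 _).continuousAt.preimage_mem_nhds
    exact Metric.ball_mem_nhds _ hr
  obtain ⟨ε, hε, hsub⟩ := Metric.mem_nhds_iff.1 h3
  refine MvPolynomial.funext_set (fun _ => Metric.ball (0 : ℝ) ε) (fun i => ?_) ?_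
  · rw [Real.ball_eq_Ioo]
    exact Set.Ioo_infinite (by linarith)
  · intro x hx
    have : x ∈ Metric.ball (0 : Fin d → ℝ) ε := by
      rw [ball_pi _ hε]; exact hx
    have := h2 (hsub this)
    simpa [ev] using this

lemma core {d : ℕ} {r : ℝ} (hr : 0 < r) (W : Submodule ℝ (MvPolynomial (Fin d) ℝ))
    [FiniteDimensional ℝ W] (j : Fin d) : ∃ C : ℝ, 0 ≤ C ∧ ∀ P ∈ W,
    ∫ x in Metric.ball (0 : EuclideanSpace ℝ (Fin d)) 1, ev (MvPolynomial.pderiv j P) x ^ 2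
      ≤ C * ∫ x in Metric.ball (0 : EuclideanSpace ℝ (Fin d)) r, ev P x ^ 2 := by
  let L := (toL (d := d) r).comp W.subtype
  have hL : Function.Injective L := by
    rw [← LinearMap.ker_eq_bot, LinearMap.ker_eq_bot']
    intro m hm
    exact Subtype.ext (toL_inj hr _ hm)
  let e := LinearEquiv.ofInjective L hL
  let M := (toL (d := d) 1).comp
    ((MvPolynomial.pderiv (R := ℝ) j).toLinearMap.comp (W.subtype.comp e.symm.toLinearMap))
  let T := LinearMap.toContinuousLinearMap M
  refine ⟨‖T‖ ^ 2, by positivity, fun P hP => ?_⟩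
  rw [← norm_toL, ← norm_toL, ← mul_pow]
  apply pow_le_pow_left₀ (norm_nonneg _)
  have := T.le_opNorm (e ⟨P, hP⟩)
  simpa [T, M, e, L] using this

lemma ev_hasFDerivAt {d : ℕ} (P : MvPolynomial (Fin d) ℝ) (x : EuclideanSpace ℝ (Fin d)) :
    HasFDerivAt (ev P) (∑ j, ev (MvPolynomial.pderiv j P) x • (EuclideanSpace.proj j : EuclideanSpace ℝ (Fin d) →L[ℝ] ℝ)) x := by
  induction P using MvPolynomial.induction_on with
  | C a =>
    have : ev (MvPolynomial.C a) = fun _ : EuclideanSpace ℝ (Fin d) => a := by ext; simp [ev]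
    rw [this]
    refine (hasFDerivAt_const (𝕜 := ℝ) a x).congr_fderiv ?_
    simp [ev]
  | add p q hp hq =>
    have : ev (p + q) = fun y => ev p y + ev q y := by ext; simp [ev]
    rw [this]
    refine (hp.add hq).congr_fderiv ?_
    simp [ev, add_smul, Finset.sum_add_distrib]
  | mul_X p i hp =>
    have : ev (p * MvPolynomial.X i) = fun y => ev p y * y i := by ext; simp [ev]
    rw [this]
    have hX : HasFDerivAt (fun y : EuclideanSpace ℝ (Fin d) => y i)
      ((EuclideanSpace.proj i : EuclideanSpace ℝ (Fin d) →L[ℝ] ℝ)) x :=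
      ((EuclideanSpace.proj i : EuclideanSpace ℝ (Fin d) →L[ℝ] ℝ)).hasFDerivAt
    refine (hp.mul hX).congr_fderiv ?_
    ext v
    simp [ev, MvPolynomial.pderiv_X, Pi.single_apply, add_mul, Finset.sum_add_distrib,
      Finset.mul_sum, apply_ite, ite_mul, mul_ite, Finset.sum_ite_eq]
    try ring_nf

lemma pderiv_ev {d : ℕ} (P : MvPolynomial (Fin d) ℝ) (j : Fin d) :
    pderiv' (ev P) j = ev (MvPolynomial.pderiv j P) := by
  ext x
  rw [pderiv', (ev_hasFDerivAt P x).fderiv]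
  simp [Finset.sum_ite_eq, Pi.single_apply]

lemma lap_ev {d : ℕ} (P : MvPolynomial (Fin d) ℝ) (x : EuclideanSpace ℝ (Fin d)) :
    lap' (ev P) x = ∑ j, ev (MvPolynomial.pderiv j (MvPolynomial.pderiv j P)) x := by
  simp [lap', ← pderiv_ev]

/-- Affine substitution. -/
noncomputable def aff {d : ℕ} (h : ℝ) (z : EuclideanSpace ℝ (Fin d)) :
    MvPolynomial (Fin d) ℝ →ₐ[ℝ] MvPolynomial (Fin d) ℝ :=
  MvPolynomial.aeval (fun j => MvPolynomial.C (z j) + MvPolynomial.C h * MvPolynomial.X j)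

lemma ev_aff {d : ℕ} (h : ℝ) (z : EuclideanSpace ℝ (Fin d)) (P : MvPolynomial (Fin d) ℝ)
    (y : EuclideanSpace ℝ (Fin d)) : ev (aff h z P) y = ev P (z + h • y) := by
  induction P using MvPolynomial.induction_on with
  | C a => simp [ev, aff]
  | add p q hp hq => simp only [ev, map_add] at *; rw [hp, hq]
  | mul_X p i hp => simp only [ev, map_mul] at *; rw [hp]; simp [aff]

lemma pderiv_aff {d : ℕ} (h : ℝ) (z : EuclideanSpace ℝ (Fin d)) (P : MvPolynomial (Fin d) ℝ)
    (j : Fin d) : MvPolynomial.pderiv j (aff h z P) = h • aff h z (MvPolynomial.pderiv j P) := by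
  induction P using MvPolynomial.induction_on with
  | C a => simp [aff]
  | add p q hp hq => simp [hp, hq]
  | mul_X p i hp =>
    rw [map_mul, Derivation.leibniz, hp, Derivation.leibniz]
    simp only [aff, MvPolynomial.aeval_X, map_add, MvPolynomial.pderiv_C, MvPolynomial.pderiv_C_mul,
      MvPolynomial.pderiv_X, smul_eq_mul, map_mul, Pi.single_apply, MvPolynomial.smul_eq_C_mul]
    split_ifs <;> simp <;> ring

lemma aff_deg {d k : ℕ} (h : ℝ) (z : EuclideanSpace ℝ (Fin d)) (P : MvPolynomial (Fin d) ℝ)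
    (hP : P.totalDegree ≤ k) : (aff h z P).totalDegree ≤ k := by
  rw [aff, MvPolynomial.aeval_def, MvPolynomial.eval₂_eq']
  refine MvPolynomial.totalDegree_finsetSum_le fun s hs => ?_
  refine (MvPolynomial.totalDegree_mul _ _).trans ?_
  have h0 : (algebraMap ℝ (MvPolynomial (Fin d) ℝ) (MvPolynomial.coeff s P)).totalDegree = 0 :=
    MvPolynomial.totalDegree_C _
  rw [h0, zero_add]
  refine (MvPolynomial.totalDegree_finsetProd _ _).trans ?_
  have h1 := (MvPolynomial.le_totalDegree hs).trans hP
  rw [Finsupp.sum_fintype _ _ (fun _ => rfl)] at h1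
  refine le_trans (Finset.sum_le_sum fun i _ => ?_) h1
  refine (MvPolynomial.totalDegree_pow _ _).trans ?_
  have : (MvPolynomial.C (z i) + MvPolynomial.C h * MvPolynomial.X i : MvPolynomial (Fin d) ℝ).totalDegree ≤ 1 := by
    refine (MvPolynomial.totalDegree_add _ _).trans (max_le (by simp) ?_)
    refine (MvPolynomial.totalDegree_mul _ _).trans (by simp)
  nlinarith

lemma int_aff {d : ℕ} {h : ℝ} (hh : 0 < h) (z : EuclideanSpace ℝ (Fin d)) (r : ℝ)
    (f : EuclideanSpace ℝ (Fin d) → ℝ) :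
    ∫ x in Metric.ball z (r * h), f x =
      h ^ d * ∫ y in Metric.ball (0 : EuclideanSpace ℝ (Fin d)) r, f (z + h • y) := by
  rw [Measure.setIntegral_comp_smul_of_pos volume (fun w => f (z + w)) _ hh]
  rw [smul_ball hh.ne', smul_zero, Real.norm_of_nonneg hh.le, finrank_euclideanSpace_fin, smul_eq_mul,
    ← mul_assoc, mul_inv_cancel₀ (by positivity), one_mul, mul_comm h r]
  have := (measurePreserving_add_left volume z).setIntegral_preimage_emb
    (measurableEmbedding_addLeft z) f (Metric.ball z (r * h))
  rw [← this]
  congr 2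
  ext y
  simp

lemma inv_one {d k : ℕ} {ρ : ℝ} (hρ : 0 < ρ) (j : Fin d) : ∃ C : ℝ, 0 ≤ C ∧
    ∀ (h : ℝ), 0 < h → ∀ (z : EuclideanSpace ℝ (Fin d)) (P : MvPolynomial (Fin d) ℝ),
      P.totalDegree ≤ k →
      h ^ 2 * ∫ x in Metric.ball z h, ev (MvPolynomial.pderiv j (MvPolynomial.pderiv j P)) x ^ 2
        ≤ C * ∫ x in Metric.ball z (ρ * h), ev (MvPolynomial.pderiv j P) x ^ 2 := by
  let W := (MvPolynomial.restrictTotalDegree (Fin d) ℝ k).map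
    (MvPolynomial.pderiv (R := ℝ) j).toLinearMap
  obtain ⟨C, hC, H⟩ := core hρ W j
  refine ⟨C, hC, fun h hh z P hP => ?_⟩
  have hmem : aff h z (MvPolynomial.pderiv j P) ∈ W := by
    have h1 : MvPolynomial.pderiv j (aff h z P) ∈ W :=
      Submodule.mem_map_of_mem ((MvPolynomial.mem_restrictTotalDegree _ _ _).2 (aff_deg h z P hP))
    rw [pderiv_aff] at h1
    exact (Submodule.smul_mem_iff _ hh.ne').1 h1
  have h2 := H _ hmem
  rw [pderiv_aff] at h2
  have h3 := int_aff hh z 1 (fun x => ev (MvPolynomial.pderiv j (MvPolynomial.pderiv j P)) x ^ 2)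
  rw [one_mul] at h3
  rw [h3, int_aff hh z ρ]
  have h4 : ∀ x, ev (h • aff h z (MvPolynomial.pderiv j (MvPolynomial.pderiv j P))) x ^ 2
      = h ^ 2 * ev (MvPolynomial.pderiv j (MvPolynomial.pderiv j P)) (z + h • x) ^ 2 := by
    intro x
    rw [← ev_aff]
    simp [ev, MvPolynomial.smul_eval, mul_pow]
  simp only [h4, ev_aff] at h2
  rw [integral_const_mul] at h2
  have := mul_le_mul_of_nonneg_left h2 (pow_nonneg hh.le d)
  linarith

lemma inv_lap {d k : ℕ} {ρ : ℝ} (hρ : 0 < ρ) : ∃ C : ℝ, 0 ≤ C ∧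
    ∀ (h : ℝ), 0 < h → ∀ (z : EuclideanSpace ℝ (Fin d)) (K : Set (EuclideanSpace ℝ (Fin d))),
      Metric.ball z (ρ * h) ⊆ K → K ⊆ Metric.ball z h →
      ∀ (P : MvPolynomial (Fin d) ℝ), P.totalDegree ≤ k →
      h ^ 2 * ∫ x in K, lap' (ev P) x ^ 2 ≤ C * ∫ x in K, ∑ j, pderiv' (ev P) j x ^ 2 := by
  choose C hC H using fun j : Fin d => inv_one (k := k) hρ j
  refine ⟨d * ∑ j, C j, mul_nonneg (by positivity) (Finset.sum_nonneg fun j _ => hC j),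
    fun h hh z K hK1 hK2 P hP => ?_⟩
  simp only [pderiv_ev, lap_ev]
  have cont2 : ∀ Q : MvPolynomial (Fin d) ℝ, Continuous fun x => ev Q x ^ 2 :=
    fun Q => (ev_cont Q).pow 2
  have A : ∫ x in K, (∑ j, ev (MvPolynomial.pderiv j (MvPolynomial.pderiv j P)) x) ^ 2 ≤
      ∑ j, d * ∫ x in Metric.ball z h,
        ev (MvPolynomial.pderiv j (MvPolynomial.pderiv j P)) x ^ 2 := by
    calc _ ≤ ∫ x in K, ∑ j, d * ev (MvPolynomial.pderiv j (MvPolynomial.pderiv j P)) x ^ 2 := by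
          apply integral_mono
          · exact intOn ((continuous_finsetSum _ fun j _ => ev_cont _).pow 2) z h hK2
          · exact intOn (continuous_finsetSum _ fun j _ => (cont2 _).const_mul _) z h hK2
          · intro x
            have := sq_sum_le_card_mul_sum_sq (s := Finset.univ)
              (f := fun j => ev (MvPolynomial.pderiv j (MvPolynomial.pderiv j P)) x)
            simpa [Finset.mul_sum] using this
      _ = ∑ j, d * ∫ x in K, ev (MvPolynomial.pderiv j (MvPolynomial.pderiv j P)) x ^ 2 := by
          rw [integral_finsetSum]
          · simp only [integral_const_mul]
          · intro j _
            exact intOn ((cont2 _).const_mul _) z h hK2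
      _ ≤ _ := by
          refine Finset.sum_le_sum fun j _ => mul_le_mul_of_nonneg_left ?_ (by positivity)
          exact setIntegral_mono_set (intOn (cont2 _) z h subset_rfl)
            (Filter.Eventually.of_forall fun x => sq_nonneg _) hK2.eventuallyLE
  have B : ∀ j, ∫ x in Metric.ball z (ρ * h), ev (MvPolynomial.pderiv j P) x ^ 2 ≤
      ∫ x in K, ∑ j, ev (MvPolynomial.pderiv j P) x ^ 2 := by
    intro j
    calc _ ≤ ∫ x in K, ev (MvPolynomial.pderiv j P) x ^ 2 :=
          setIntegral_mono_set (intOn (cont2 _) z h hK2)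
            (Filter.Eventually.of_forall fun x => sq_nonneg _) hK1.eventuallyLE
      _ ≤ _ := by
          apply integral_mono
          · exact intOn (cont2 _) z h hK2
          · exact intOn (continuous_finsetSum _ fun j _ => cont2 _) z h hK2
          · intro x
            exact Finset.single_le_sum (f := fun j => ev (MvPolynomial.pderiv j P) x ^ 2)
              (fun i _ => sq_nonneg _) (Finset.mem_univ j)
  refine (mul_le_mul_of_nonneg_left A (sq_nonneg h)).trans ?_
  rw [Finset.mul_sum, mul_assoc, Finset.sum_mul, Finset.mul_sum]
  refine Finset.sum_le_sum fun j _ => ?_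
  rw [mul_left_comm]
  exact mul_le_mul_of_nonneg_left ((H j h hh z P hP).trans
    (mul_le_mul_of_nonneg_left (B j) (hC j))) (by positivity)

end PGC

/-- Element-level pressure-gradient control: for fixed `d ≥ 1`, `k`,
`ρ ∈ (0,1]` there is `C = C(d,k,ρ)` such that for every `h > 0`, every convex `K` with
`B(z,ρh) ⊆ K ⊆ B(z,h)`, every `C¹` function `p : ℝ^d → ℝ` and every polynomial vector
field `u` of degree `≤ k`,
`h² ∫_K ‖∇p‖² ≤ C (h² ∫_K ‖∇p − Δu‖² + ∫_K ‖Du‖²)`. -/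
theorem pressure_gradient_control
    (d k : ℕ) (hd : 1 ≤ d) (ρ : ℝ) (hρ : ρ ∈ Set.Ioc (0 : ℝ) 1) :
    ∃ C : ℝ, ∀ (h : ℝ), 0 < h →
      ∀ (z : EuclideanSpace ℝ (Fin d)) (K : Set (EuclideanSpace ℝ (Fin d))),
        Convex ℝ K → Metric.ball z (ρ * h) ⊆ K → K ⊆ Metric.ball z h →
      ∀ (p : EuclideanSpace ℝ (Fin d) → ℝ), ContDiff ℝ 1 p →
      ∀ (u : EuclideanSpace ℝ (Fin d) → EuclideanSpace ℝ (Fin d)),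
      (∀ i : Fin d, ∃ P : MvPolynomial (Fin d) ℝ, P.totalDegree ≤ k ∧
        ∀ x, u x i = MvPolynomial.eval (fun j => x j) P) →
      h ^ 2 * (∫ x in K, ‖gradient p x‖ ^ 2) ≤
        C * (h ^ 2 * (∫ x in K,
              ∑ i : Fin d, (gradient p x i - lap' (fun y => u y i) x) ^ 2)
          + ∫ x in K, ∑ i : Fin d, ∑ j : Fin d,
              (pderiv' (fun y => u y i) j x) ^ 2) := by
  obtain ⟨C, hC, H⟩ := PGC.inv_lap (d := d) (k := k) hρ.1
  refine ⟨2 + 2 * C, fun h hh z K _ hK1 hK2 p hp u hu => ?_⟩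
  choose P hP hPu using hu
  have hu' : ∀ i, (fun y => u y i) = PGC.ev (P i) := fun i => funext fun x => hPu i x
  simp only [hu']
  have hg : Continuous (gradient p) :=
    (InnerProductSpace.toDual ℝ (EuclideanSpace ℝ (Fin d))).symm.continuous.comp
      (hp.continuous_fderiv one_ne_zero)
  have hgi : ∀ i, Continuous fun x => gradient p x i := fun i => by fun_prop
  have hl : ∀ i, Continuous (lap' (PGC.ev (P i))) := fun i => by
    have : lap' (PGC.ev (P i)) = fun x => _ := funext fun x => PGC.lap_ev (P i) x
    rw [this]
    exact continuous_finsetSum _ fun j _ => PGC.ev_cont _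
  have hpd : ∀ i j, Continuous (pderiv' (PGC.ev (P i)) j) := fun i j => by
    rw [PGC.pderiv_ev]; exact PGC.ev_cont _
  have c1 : Continuous fun x => ∑ i, (gradient p x i - lap' (PGC.ev (P i)) x) ^ 2 :=
    continuous_finsetSum _ fun i _ => ((hgi i).sub (hl i)).pow 2
  have c2 : ∀ i, Continuous fun x => lap' (PGC.ev (P i)) x ^ 2 := fun i => (hl i).pow 2
  have c2' : Continuous fun x => ∑ i, lap' (PGC.ev (P i)) x ^ 2 :=
    continuous_finsetSum _ fun i _ => c2 i
  have c3 : ∀ i, Continuous fun x => ∑ j, pderiv' (PGC.ev (P i)) j x ^ 2 := fun i =>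
    continuous_finsetSum _ fun j _ => (hpd i j).pow 2
  have e1 : ∫ x in K, ‖gradient p x‖ ^ 2 ≤
      2 * (∫ x in K, ∑ i, (gradient p x i - lap' (PGC.ev (P i)) x) ^ 2) +
      2 * ∑ i, ∫ x in K, lap' (PGC.ev (P i)) x ^ 2 := by
    rw [← integral_finsetSum _ (fun i _ => PGC.intOn (c2 i) z h hK2), ← integral_const_mul,
      ← integral_const_mul, ← integral_add (PGC.intOn (c1.const_mul 2) z h hK2)
        (PGC.intOn (c2'.const_mul 2) z h hK2)]
    apply integral_mono
    · exact PGC.intOn (hg.norm.pow 2) z h hK2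
    · exact PGC.intOn ((c1.const_mul 2).add (c2'.const_mul 2)) z h hK2
    · intro x
      simp only
      rw [EuclideanSpace.real_norm_sq_eq, Finset.mul_sum, Finset.mul_sum,
        ← Finset.sum_add_distrib]
      refine Finset.sum_le_sum fun i _ => ?_
      nlinarith [sq_nonneg (gradient p x i - 2 * lap' (PGC.ev (P i)) x)]
  have e2 : h ^ 2 * ∑ i, ∫ x in K, lap' (PGC.ev (P i)) x ^ 2 ≤
      C * ∫ x in K, ∑ i, ∑ j, pderiv' (PGC.ev (P i)) j x ^ 2 := by
    rw [integral_finsetSum _ (fun i _ => PGC.intOn (c3 i) z h hK2), Finset.mul_sum, Finset.mul_sum]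
    exact Finset.sum_le_sum fun i _ => H h hh z K hK1 hK2 (P i) (hP i)
  have n1 : 0 ≤ ∫ x in K, ∑ i, (gradient p x i - lap' (PGC.ev (P i)) x) ^ 2 :=
    integral_nonneg fun x => Finset.sum_nonneg fun i _ => sq_nonneg _
  have n2 : 0 ≤ ∫ x in K, ∑ i, ∑ j, pderiv' (PGC.ev (P i)) j x ^ 2 :=
    integral_nonneg fun x => Finset.sum_nonneg fun i _ => Finset.sum_nonneg fun j _ => sq_nonneg _
  have e3 := mul_le_mul_of_nonneg_left e1 (sq_nonneg h)
  have n3 := mul_nonneg hC (mul_nonneg (sq_nonneg h) n1)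
  linarith
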